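/- arXiv:quant-ph/0509079 — 8 statements merged into one kernel-verified Lean document; each statement's English description precedes it below -/
import Mathlib

section
/- Let m, n ≥ 1 and let D, E be linear subspaces of M_{m×n}(ℂ). Then (D, E) is an intersection pair if and only if there exists a PPT matrix A ∈ 𝕋 with Range A = D̃ and Range A^τ = Ẽ. Moreover, if this is the case, then the relative interior of τ(D,E) equals { A ∈ 𝕋 : Range A = D̃ and Range A^τ = Ẽ }. -/
open Matrix
open scoped ComplexOrder

/-- The partial (block) transpose of `A ∈ M_n ⊗ M_m`:  if `A = ∑ a_{ij} ⊗ e_{ij}`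
(i.e. `A (r,i) (s,j) = (a_{ij}) r s`) then `A^τ = ∑ a_{ji} ⊗ e_{ij}`. -/
def partialTranspose {m n : ℕ} (A : Matrix (Fin n × Fin m) (Fin n × Fin m) ℂ) :
    Matrix (Fin n × Fin m) (Fin n × Fin m) ℂ :=
  Matrix.of fun p q => A (p.1, q.2) (q.1, p.2)

/-- The vectorization `z ↦ z̃ ∈ ℂ^n ⊗ ℂ^m` as a linear map; the component of `z̃` at
the index `(k, i)` is `z i k`. -/
def vecL (m n : ℕ) : Matrix (Fin m) (Fin n) ℂ →ₗ[ℂ] (Fin n × Fin m → ℂ) where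
  toFun z := fun p => z p.2 p.1
  map_add' _ _ := rfl
  map_smul' _ _ := rfl

/-- The cone `𝕋` of matrices of positive partial transpose (PPT matrices). -/
def pptCone (m n : ℕ) : Set (Matrix (Fin n × Fin m) (Fin n × Fin m) ℂ) :=
  {A | A.PosSemidef ∧ (partialTranspose A).PosSemidef}

/-- `Ψ_D`: positive semidefinite matrices with range contained in `D̃`. -/
def PsiD {m n : ℕ} (D : Submodule ℂ (Matrix (Fin m) (Fin n) ℂ)) :
    Set (Matrix (Fin n × Fin m) (Fin n × Fin m) ℂ) :=
  {A | A.PosSemidef ∧ LinearMap.range A.mulVecLin ≤ D.map (vecL m n)}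

/-- `Ψ^E`: matrices whose partial transpose lies in `Ψ_E`. -/
def PsiE {m n : ℕ} (E : Submodule ℂ (Matrix (Fin m) (Fin n) ℂ)) :
    Set (Matrix (Fin n × Fin m) (Fin n × Fin m) ℂ) :=
  {A | partialTranspose A ∈ PsiD E}

/-- `τ(D,E) = Ψ_D ∩ Ψ^E`. -/
def tauSet {m n : ℕ} (D E : Submodule ℂ (Matrix (Fin m) (Fin n) ℂ)) :
    Set (Matrix (Fin n × Fin m) (Fin n × Fin m) ℂ) :=
  PsiD D ∩ PsiE E

/-- `(D, E)` is an intersection pair: `τ(D,E)` is nonempty and its relative interior is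
contained in the relative interiors of both `Ψ_D` and `Ψ^E`. -/
def IsIntersectionPair {m n : ℕ} (D E : Submodule ℂ (Matrix (Fin m) (Fin n) ℂ)) : Prop :=
  (tauSet D E).Nonempty ∧
    intrinsicInterior ℝ (tauSet D E) ⊆ intrinsicInterior ℝ (PsiD D) ∧
    intrinsicInterior ℝ (tauSet D E) ⊆ intrinsicInterior ℝ (PsiE E)

open Topology in
theorem ri_extend {V : Type*} [AddCommGroup V] [Module ℝ V] [TopologicalSpace V]
    [IsTopologicalAddGroup V] [ContinuousSMul ℝ V] {S : Set V} {A B : V}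
    (hA : A ∈ intrinsicInterior ℝ S) (hB : B ∈ S) :
    ∃ ε : ℝ, 0 < ε ∧ A + ε • (A - B) ∈ S := by
  have hAS : A ∈ S := intrinsicInterior_subset hA
  obtain ⟨y, hy, rfl⟩ := mem_intrinsicInterior.1 hA
  have hmem : ∀ t : ℝ, (y : V) + t • ((y : V) - B) ∈ affineSpan ℝ S := by
    intro t
    have := AffineMap.lineMap_mem (k := ℝ) (Q := affineSpan ℝ S) (-t) y.2
      (subset_affineSpan ℝ S hB)
    rw [AffineMap.lineMap_apply_module'] at this
    convert this using 1
    module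
  let g : ℝ → affineSpan ℝ S := fun t => ⟨(y : V) + t • ((y : V) - B), hmem t⟩
  have hg : Continuous g := by
    apply Continuous.subtype_mk
    fun_prop
  have hg0 : g 0 = y := by
    apply Subtype.ext
    simp [g]
  have h1 : ∀ᶠ t in 𝓝 (0 : ℝ), g t ∈ ((↑) ⁻¹' S : Set (affineSpan ℝ S)) := by
    have := hg.continuousAt (x := 0)
    apply this
    rw [hg0]
    exact mem_interior_iff_mem_nhds.1 hy
  have h2 : ∀ᶠ t in 𝓝[>] (0 : ℝ), g t ∈ ((↑) ⁻¹' S : Set (affineSpan ℝ S)) :=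
    h1.filter_mono nhdsWithin_le_nhds
  obtain ⟨t, ht, ht0⟩ := (h2.and self_mem_nhdsWithin).exists
  exact ⟨t, ht0, ht⟩

open Topology in
theorem mem_ri_of {V : Type*} [AddCommGroup V] [Module ℝ V] [TopologicalSpace V]
    [IsTopologicalAddGroup V] {S : Set V} {A : V} (P : Submodule ℝ V)
    (hA : A ∈ S) (hSP : S ⊆ P) (h : ∀ᶠ B in 𝓝 A, B ∈ P → B ∈ S) :
    A ∈ intrinsicInterior ℝ S := by
  have hspan : affineSpan ℝ S ≤ P.toAffineSubspace := by
    rw [affineSpan_le]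
    exact hSP
  refine mem_intrinsicInterior.2 ⟨⟨A, subset_affineSpan ℝ S hA⟩, ?_, rfl⟩
  rw [mem_interior_iff_mem_nhds, nhds_subtype_eq_comap]
  refine Filter.mem_comap.2 ⟨_, h, ?_⟩
  intro x hx
  exact hx (hspan x.2)

section aux
variable {ι : Type*} [Fintype ι]

theorem range_exists [DecidableEq ι] (W : Submodule ℂ (ι → ℂ)) :
    ∃ B : Matrix ι ι ℂ, B.PosSemidef ∧ LinearMap.range B.mulVecLin = W := by
  obtain ⟨f, hf⟩ := W.exists_isCompl
  let p : (ι → ℂ) →ₗ[ℂ] (ι → ℂ) := W.subtype ∘ₗ W.projectionOnto f hf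
  have hp : LinearMap.range p = W := by
    rw [LinearMap.range_comp, Submodule.range_projectionOnto]; simp
  let M := LinearMap.toMatrix' p
  have hM : M.mulVecLin = p := by
    rw [← Matrix.toLin'_apply', Matrix.toLin'_toMatrix']
  refine ⟨M * Mᴴ, Matrix.posSemidef_self_mul_conjTranspose M, ?_⟩
  rw [← hp, ← hM]
  apply Submodule.eq_of_le_of_finrank_eq
  · rw [Matrix.mulVecLin_mul]
    exact LinearMap.range_comp_le_range _ _
  · exact Matrix.rank_self_mul_conjTranspose M

theorem range_eq_of {A B : Matrix ι ι ℂ} {W : Submodule ℂ (ι → ℂ)} {ε : ℝ} (hε : 0 < ε)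
    (hB : B.PosSemidef) (hBW : LinearMap.range B.mulVecLin = W)
    (hAW : LinearMap.range A.mulVecLin ≤ W)
    (h : (A + ε • (A - B)).PosSemidef) : LinearMap.range A.mulVecLin = W := by
  apply Submodule.eq_of_le_of_finrank_le hAW
  have hker : LinearMap.ker A.mulVecLin ≤ LinearMap.ker B.mulVecLin := by
    intro v hv
    have hv' : A *ᵥ v = 0 := hv
    have h1 := h.dotProduct_mulVec_nonneg v
    have h2 := hB.dotProduct_mulVec_nonneg v
    have h3 : star v ⬝ᵥ ((A + ε • (A - B)) *ᵥ v) = -((ε : ℂ) * (star v ⬝ᵥ (B *ᵥ v))) := by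
      simp [Matrix.add_mulVec, Matrix.smul_mulVec, Matrix.sub_mulVec, hv', dotProduct_smul]
    rw [h3] at h1
    have hε' : (0 : ℂ) < (ε : ℂ) := by exact_mod_cast hε
    have h4 : star v ⬝ᵥ (B *ᵥ v) = 0 := by
      have h5 : (ε : ℂ) * (star v ⬝ᵥ (B *ᵥ v)) = 0 :=
        le_antisymm (neg_nonneg.1 h1) (mul_nonneg hε'.le h2)
      exact (mul_eq_zero.1 h5).resolve_left hε'.ne'
    exact (hB.dotProduct_mulVec_zero_iff v).1 h4
  have h1 := LinearMap.finrank_range_add_finrank_ker A.mulVecLin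
  have h2 := LinearMap.finrank_range_add_finrank_ker B.mulVecLin
  have h3 := Submodule.finrank_mono hker
  rw [← hBW]
  omega

open Topology in
theorem eventually_psd {A : Matrix ι ι ℂ} {W : Submodule ℂ (ι → ℂ)} (hA : A.PosSemidef)
    (hAW : LinearMap.range A.mulVecLin = W) :
    ∀ᶠ B in 𝓝 A, B.IsHermitian → LinearMap.range B.mulVecLin ≤ W → B.PosSemidef := by
  have hzero : ∀ w ∈ W, star w ⬝ᵥ (A *ᵥ w) = 0 → w = 0 := by
    intro w hw h0
    have h1 : A *ᵥ w = 0 := (hA.dotProduct_mulVec_zero_iff w).1 h0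
    rw [← hAW] at hw
    obtain ⟨x, rfl⟩ := hw
    rw [← Matrix.mulVecLin_apply] at h1
    simp only [Matrix.mulVecLin_apply] at h1 ⊢
    have h2 : star (A *ᵥ x) ⬝ᵥ (A *ᵥ x) = 0 := by
      rw [Matrix.star_mulVec, ← Matrix.dotProduct_mulVec, hA.isHermitian.eq, h1, dotProduct_zero]
    exact dotProduct_star_self_eq_zero.1 h2
  have hK : IsCompact (Metric.sphere (0 : ι → ℂ) 1 ∩ (W : Set (ι → ℂ))) :=
    (isCompact_sphere _ _).inter_right W.closed_of_finiteDimensional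
  have hcont : Continuous fun q : Matrix ι ι ℂ × (ι → ℂ) => (star q.2 ⬝ᵥ (q.1 *ᵥ q.2)).re := by
    apply Complex.continuous_re.comp
    exact (continuous_snd.star).dotProduct (continuous_fst.matrix_mulVec continuous_snd)
  have hev : ∀ᶠ B in 𝓝 A, ∀ v ∈ Metric.sphere (0 : ι → ℂ) 1 ∩ (W : Set (ι → ℂ)),
      0 < (star v ⬝ᵥ (B *ᵥ v)).re := by
    apply hK.eventually_forall_of_forall_eventually
    rintro v ⟨hv1, hvW⟩
    have hpos : 0 < (star v ⬝ᵥ (A *ᵥ v)).re := by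
      have h0 := hA.dotProduct_mulVec_nonneg v
      have hne : star v ⬝ᵥ (A *ᵥ v) ≠ 0 := by
        intro h
        have := hzero v hvW h
        simp [this] at hv1
      exact (Complex.pos_iff.1 (lt_of_le_of_ne h0 hne.symm)).1
    exact hcont.continuousAt.eventually (lt_mem_nhds (b := _) hpos)
  filter_upwards [hev] with B hB hBh hBW
  have hBnn : ∀ w ∈ W, 0 ≤ (star w ⬝ᵥ (B *ᵥ w)).re := by
    intro w hw
    by_cases hw0 : w = 0
    · simp [hw0]
    have hn : 0 < ‖w‖ := norm_pos_iff.2 hw0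
    have h1 := hB ((‖w‖⁻¹ : ℂ) • w) ⟨by
      simp [norm_smul, hn.ne'], W.smul_mem _ hw⟩
    have h2 : (star ((‖w‖⁻¹ : ℂ) • w) ⬝ᵥ (B *ᵥ ((‖w‖⁻¹ : ℂ) • w)))
        = ((‖w‖⁻¹ * ‖w‖⁻¹ : ℝ) : ℂ) * (star w ⬝ᵥ (B *ᵥ w)) := by
      simp [Matrix.mulVec_smul, star_smul, mul_assoc]
    rw [h2, Complex.re_ofReal_mul] at h1
    exact (pos_of_mul_pos_right h1 (by positivity)).le
  have hdec : ∀ v : ι → ℂ, ∃ w ∈ W, A *ᵥ v = A *ᵥ w := by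
    intro v
    have hm : ∀ w ∈ W, A.mulVecLin w ∈ W := fun w _ => hAW ▸ LinearMap.mem_range_self _ w
    let f := A.mulVecLin.restrict hm
    have hf : Function.Injective f := by
      rw [injective_iff_map_eq_zero]
      rintro ⟨w, hw⟩ h
      have h' : A *ᵥ w = 0 := congrArg Subtype.val h
      exact Subtype.ext (hzero w hw (by rw [h', dotProduct_zero]))
    obtain ⟨w, hw⟩ := (LinearMap.injective_iff_surjective.1 hf)
      ⟨A.mulVecLin v, hAW ▸ LinearMap.mem_range_self _ v⟩
    exact ⟨w, w.2, (congrArg Subtype.val hw).symm⟩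
  refine Matrix.PosSemidef.of_dotProduct_mulVec_nonneg hBh fun v => ?_
  obtain ⟨w, hw, hvw⟩ := hdec v
  have hAu : A *ᵥ (v - w) = 0 := by rw [Matrix.mulVec_sub, hvw, sub_self]
  have hBu : B *ᵥ (v - w) = 0 := by
    have hx : ∀ x, star (B *ᵥ x) ⬝ᵥ (v - w) = 0 := by
      intro x
      have : B *ᵥ x ∈ LinearMap.range A.mulVecLin :=
        hAW ▸ hBW (LinearMap.mem_range_self B.mulVecLin x)
      obtain ⟨y, hy⟩ := this
      rw [← hy, Matrix.mulVecLin_apply, Matrix.star_mulVec, ← Matrix.dotProduct_mulVec,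
        hA.isHermitian.eq, hAu, dotProduct_zero]
    have h2 := hx (B *ᵥ (v - w))
    rw [Matrix.star_mulVec, ← Matrix.dotProduct_mulVec, hBh.eq] at h2
    exact dotProduct_star_self_eq_zero.1 h2
  have hBv : B *ᵥ v = B *ᵥ w := by
    rw [Matrix.mulVec_sub] at hBu
    exact sub_eq_zero.1 hBu
  have hre : star v ⬝ᵥ (B *ᵥ v) = star w ⬝ᵥ (B *ᵥ w) := by
    rw [hBv]
    have e : ∀ x y, star x ⬝ᵥ (B *ᵥ y) = star (B *ᵥ x) ⬝ᵥ y := by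
      intro x y
      rw [Matrix.star_mulVec, ← Matrix.dotProduct_mulVec, hBh.eq]
    rw [e, e, hBv]
  rw [hre]
  refine Complex.nonneg_iff.2 ⟨hBnn w hw, ?_⟩
  exact (hBh.im_star_dotProduct_mulVec_self w).symm

/-- Hermitian matrices with range in `W`, as a real subspace. -/
def hermSub (W : Submodule ℂ (ι → ℂ)) : Submodule ℝ (Matrix ι ι ℂ) where
  carrier := {B | B.IsHermitian ∧ LinearMap.range B.mulVecLin ≤ W}
  zero_mem' := ⟨Matrix.isHermitian_zero, by simp⟩
  add_mem' := by
    rintro a b ⟨h1, h2⟩ ⟨h3, h4⟩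
    refine ⟨h1.add h3, ?_⟩
    rintro _ ⟨x, rfl⟩
    rw [Matrix.mulVecLin_add]
    exact W.add_mem (h2 ⟨x, rfl⟩) (h4 ⟨x, rfl⟩)
  smul_mem' := by
    rintro c a ⟨h1, h2⟩
    refine ⟨?_, ?_⟩
    · rw [Matrix.IsHermitian, Matrix.conjTranspose_smul, h1.eq, star_trivial]
    · rintro _ ⟨x, rfl⟩
      have : (c • a).mulVecLin x = (c : ℂ) • a.mulVecLin x := by
        simp [Matrix.smul_mulVec]
      rw [this]
      exact W.smul_mem _ (h2 ⟨x, rfl⟩)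

end aux

/-- Partial transpose as a real linear map. -/
def ptL (m n : ℕ) : Matrix (Fin n × Fin m) (Fin n × Fin m) ℂ →ₗ[ℝ]
    Matrix (Fin n × Fin m) (Fin n × Fin m) ℂ where
  toFun := partialTranspose
  map_add' _ _ := rfl
  map_smul' _ _ := rfl

theorem pt_pt {m n : ℕ} (A : Matrix (Fin n × Fin m) (Fin n × Fin m) ℂ) :
    partialTranspose (partialTranspose A) = A := rfl

theorem pt_cont (m n : ℕ) : Continuous (partialTranspose (m := m) (n := n)) := by
  refine continuous_matrix fun i j => ?_
  exact continuous_id.matrix_elem _ _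

theorem psiD_convex {m n : ℕ} (D : Submodule ℂ (Matrix (Fin m) (Fin n) ℂ)) :
    Convex ℝ (PsiD D) := by
  intro A hA B hB a b ha hb _
  refine ⟨(hA.1.smul ha).add (hB.1.smul hb), ?_⟩
  have hA' : A ∈ hermSub (D.map (vecL m n)) := ⟨hA.1.isHermitian, hA.2⟩
  have hB' : B ∈ hermSub (D.map (vecL m n)) := ⟨hB.1.isHermitian, hB.2⟩
  exact (add_mem (Submodule.smul_mem _ a hA') (Submodule.smul_mem _ b hB')).2

theorem psiE_convex {m n : ℕ} (E : Submodule ℂ (Matrix (Fin m) (Fin n) ℂ)) :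
    Convex ℝ (PsiE E) :=
  (psiD_convex E).linear_preimage (ptL m n)

section
attribute [local instance] Matrix.normedAddCommGroup Matrix.normedSpace

theorem ri_nonempty {ι : Type*} [Fintype ι] {S : Set (Matrix ι ι ℂ)} (hS : Convex ℝ S)
    (hne : S.Nonempty) : (intrinsicInterior ℝ S).Nonempty :=
  hne.intrinsicInterior hS

end

theorem mem_ri_psiD {m n : ℕ} {D : Submodule ℂ (Matrix (Fin m) (Fin n) ℂ)}
    {A : Matrix (Fin n × Fin m) (Fin n × Fin m) ℂ} (hA : A.PosSemidef)
    (h : LinearMap.range A.mulVecLin = D.map (vecL m n)) :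
    A ∈ intrinsicInterior ℝ (PsiD D) := by
  refine mem_ri_of (hermSub (D.map (vecL m n))) ⟨hA, h.le⟩
    (fun B hB => ⟨hB.1.isHermitian, hB.2⟩) ?_
  filter_upwards [eventually_psd hA h] with B hB hP
  exact ⟨hB hP.1 hP.2, hP.2⟩

theorem mem_ri_psiE {m n : ℕ} {E : Submodule ℂ (Matrix (Fin m) (Fin n) ℂ)}
    {A : Matrix (Fin n × Fin m) (Fin n × Fin m) ℂ} (hA : (partialTranspose A).PosSemidef)
    (h : LinearMap.range (partialTranspose A).mulVecLin = E.map (vecL m n)) :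
    A ∈ intrinsicInterior ℝ (PsiE E) := by
  refine mem_ri_of ((hermSub (E.map (vecL m n))).comap (ptL m n)) ⟨hA, h.le⟩
    (fun B hB => ⟨hB.1.isHermitian, hB.2⟩) ?_
  filter_upwards [(pt_cont m n).continuousAt.eventually (eventually_psd hA h)] with B hB hP
  exact ⟨hB hP.1 hP.2, hP.2⟩

theorem mem_ri_tau {m n : ℕ} {D E : Submodule ℂ (Matrix (Fin m) (Fin n) ℂ)}
    {A : Matrix (Fin n × Fin m) (Fin n × Fin m) ℂ} (hA : A ∈ pptCone m n)
    (hD : LinearMap.range A.mulVecLin = D.map (vecL m n))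
    (hE : LinearMap.range (partialTranspose A).mulVecLin = E.map (vecL m n)) :
    A ∈ intrinsicInterior ℝ (tauSet D E) := by
  refine mem_ri_of (hermSub (D.map (vecL m n)) ⊓ (hermSub (E.map (vecL m n))).comap (ptL m n))
    ⟨⟨hA.1, hD.le⟩, ⟨hA.2, hE.le⟩⟩
    (fun B hB => ⟨⟨hB.1.1.isHermitian, hB.1.2⟩, ⟨hB.2.1.isHermitian, hB.2.2⟩⟩) ?_
  filter_upwards [eventually_psd hA.1 hD,
    (pt_cont m n).continuousAt.eventually (eventually_psd hA.2 hE)] with B hB hB' hP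
  exact ⟨⟨hB hP.1.1 hP.1.2, hP.1.2⟩, ⟨hB' hP.2.1 hP.2.2, hP.2.2⟩⟩

theorem ri_tau_ranges {m n : ℕ} {D E : Submodule ℂ (Matrix (Fin m) (Fin n) ℂ)}
    {A B : Matrix (Fin n × Fin m) (Fin n × Fin m) ℂ} (hA : A ∈ pptCone m n)
    (hD : LinearMap.range A.mulVecLin = D.map (vecL m n))
    (hE : LinearMap.range (partialTranspose A).mulVecLin = E.map (vecL m n))
    (hB : B ∈ intrinsicInterior ℝ (tauSet D E)) :
    B ∈ pptCone m n ∧ LinearMap.range B.mulVecLin = D.map (vecL m n) ∧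
      LinearMap.range (partialTranspose B).mulVecLin = E.map (vecL m n) := by
  have hBt := intrinsicInterior_subset hB
  obtain ⟨ε, hε, h⟩ := ri_extend hB (show A ∈ tauSet D E from ⟨⟨hA.1, hD.le⟩, ⟨hA.2, hE.le⟩⟩)
  exact ⟨⟨hBt.1.1, hBt.2.1⟩, range_eq_of hε hA.1 hD hBt.1.2 h.1.1,
    range_eq_of hε hA.2 hE hBt.2.2 h.2.1⟩

theorem pair_exists {m n : ℕ} {D E : Submodule ℂ (Matrix (Fin m) (Fin n) ℂ)}
    (h : IsIntersectionPair D E) :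
    ∃ A ∈ pptCone m n, LinearMap.range A.mulVecLin = D.map (vecL m n) ∧
        LinearMap.range (partialTranspose A).mulVecLin = E.map (vecL m n) := by
  obtain ⟨hne, h1, h2⟩ := h
  obtain ⟨A, hA⟩ := ri_nonempty ((psiD_convex D).inter (psiE_convex E)) hne
  have hAt := intrinsicInterior_subset hA
  refine ⟨A, ⟨hAt.1.1, hAt.2.1⟩, ?_, ?_⟩
  · obtain ⟨B, hB, hBD⟩ := range_exists (D.map (vecL m n))
    obtain ⟨ε, hε, h⟩ := ri_extend (h1 hA) (show B ∈ PsiD D from ⟨hB, hBD.le⟩)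
    exact range_eq_of hε hB hBD hAt.1.2 h.1
  · obtain ⟨B, hB, hBE⟩ := range_exists (E.map (vecL m n))
    obtain ⟨ε, hε, h⟩ := ri_extend (h2 hA)
      (show partialTranspose B ∈ PsiE E from ⟨by rwa [pt_pt], by rw [pt_pt]; exact hBE.le⟩)
    exact range_eq_of hε hB hBE hAt.2.2 h.1

/-- `(D,E)` is an intersection pair iff there is a PPT matrix `A` with range `D̃` whose
partial transpose has range `Ẽ`; in that case the relative interior of `τ(D,E)` is
exactly the set of such matrices. -/
theorem intersectionPair_iff (m n : ℕ) (hm : 1 ≤ m) (hn : 1 ≤ n)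
    (D E : Submodule ℂ (Matrix (Fin m) (Fin n) ℂ)) :
    (IsIntersectionPair D E ↔
      ∃ A ∈ pptCone m n, LinearMap.range A.mulVecLin = D.map (vecL m n) ∧
        LinearMap.range (partialTranspose A).mulVecLin = E.map (vecL m n)) ∧
    (IsIntersectionPair D E →
      intrinsicInterior ℝ (tauSet D E) =
        {A | A ∈ pptCone m n ∧ LinearMap.range A.mulVecLin = D.map (vecL m n) ∧
          LinearMap.range (partialTranspose A).mulVecLin = E.map (vecL m n)}) := by
  refine ⟨⟨pair_exists, ?_⟩, ?_⟩
  · rintro ⟨A, hA, hD, hE⟩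
    refine ⟨⟨A, ⟨⟨hA.1, hD.le⟩, ⟨hA.2, hE.le⟩⟩⟩, ?_, ?_⟩
    · intro B hB
      obtain ⟨hB1, hB2, _⟩ := ri_tau_ranges hA hD hE hB
      exact mem_ri_psiD hB1.1 hB2
    · intro B hB
      obtain ⟨hB1, _, hB3⟩ := ri_tau_ranges hA hD hE hB
      exact mem_ri_psiE hB1.2 hB3
  · intro h
    obtain ⟨A, hA, hD, hE⟩ := pair_exists h
    ext B
    exact ⟨fun hB => ri_tau_ranges hA hD hE hB, fun hB => mem_ri_tau hB.1 hB.2.1 hB.2.2⟩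
end

section
/- Let k ≥ 1, λ > 0, μ = 1/λ, and let ξ, η, ζ ∈ ℂ^k be unit vectors. Define the 9×9 Hermitian matrix X = X(ξ,η,ζ;λ) whose nonzero entries (rows and columns indexed 1,…,9) are: X₁₁ = X₅₅ = X₉₉ = X₁₅ = X₅₁ = X₁₉ = X₉₁ = X₅₉ = X₉₅ = 1; X₂₂ = X₆₆ = X₇₇ = λ²; X₃₃ = X₄₄ = X₈₈ = μ²; X₂₄ = ⟨η,ξ⟩ and X₄₂ = ⟨ξ,η⟩; X₃₇ = ⟨ζ,ξ⟩ and X₇₃ = ⟨ξ,ζ⟩; X₆₈ = ⟨ζ,η⟩ and X₈₆ = ⟨η,ζ⟩; all other entries are 0. Then X is positive semidefinite and the partial transpose X^τ is positive semidefinite; that is, X is a PPT matrix. -/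
open Matrix Complex
open scoped ComplexOrder

/-- The partial transpose of a `9 × 9` matrix viewed as a `3 × 3` array of `3 × 3`
blocks `B_{ij}`: the `(i,j)` block of `pt9 X` is `B_{ji}`. -/
def pt9 (X : Matrix (Fin 9) (Fin 9) ℂ) : Matrix (Fin 9) (Fin 9) ℂ :=
  Matrix.of fun i j =>
    X ⟨3 * ((j : ℕ) / 3) + (i : ℕ) % 3, by have := j.isLt; omega⟩
      ⟨3 * ((i : ℕ) / 3) + (j : ℕ) % 3, by have := i.isLt; omega⟩

/-- The inner product `⟨u, v⟩ = ∑ᵢ uᵢ conj(vᵢ)` on `ℂ^k`, linear in the first variable. -/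
noncomputable def ip {k : ℕ} (u v : Fin k → ℂ) : ℂ := ∑ i, u i * star (v i)

/-- The `9 × 9` matrix `X = X(ξ,η,ζ;λ)` (with `μ = 1/λ`). -/
noncomputable def Xgen {k : ℕ} (ξ η ζ : Fin k → ℂ) (lam mu : ℝ) : Matrix (Fin 9) (Fin 9) ℂ :=
  !![1, 0, 0, 0, 1, 0, 0, 0, 1;
     0, (lam : ℂ)^2, 0, ip η ξ, 0, 0, 0, 0, 0;
     0, 0, (mu : ℂ)^2, 0, 0, 0, ip ζ ξ, 0, 0;
     0, ip ξ η, 0, (mu : ℂ)^2, 0, 0, 0, 0, 0;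
     1, 0, 0, 0, 1, 0, 0, 0, 1;
     0, 0, 0, 0, 0, (lam : ℂ)^2, 0, ip ζ η, 0;
     0, 0, ip ξ ζ, 0, 0, 0, (lam : ℂ)^2, 0, 0;
     0, 0, 0, 0, 0, ip η ζ, 0, (mu : ℂ)^2, 0;
     1, 0, 0, 0, 1, 0, 0, 0, 1]

/-- A weighted block Gram matrix is positive semidefinite. -/
theorem gram_block_posSemidef {k : ℕ} (M : Matrix (Fin 9) (Fin 9) ℂ) (b : Fin 9 → Fin 4)
    (c : Fin 9 → ℝ) (w : Fin 9 → Fin k → ℂ)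
    (h : ∀ i j, M i j = if b i = b j then (c i : ℂ) * (c j : ℂ) * ip (w i) (w j) else 0) :
    M.PosSemidef := by
  have hM : M = (Matrix.of fun (i : Fin 9) (p : Fin 4 × Fin k) =>
        if b i = p.1 then (c i : ℂ) * w i p.2 else 0) *
      (Matrix.of fun (i : Fin 9) (p : Fin 4 × Fin k) =>
        if b i = p.1 then (c i : ℂ) * w i p.2 else 0)ᴴ := by
    ext i j
    rw [h, Matrix.mul_apply, Fintype.sum_prod_type, Finset.sum_eq_single (b i)]
    · by_cases hb : b i = b j
      · simp only [hb, ip, Finset.mul_sum, if_true, Matrix.of_apply, Matrix.conjTranspose_apply]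
        refine Finset.sum_congr rfl fun t _ => ?_
        simp
        ring
      · simp [hb, Ne.symm hb]
    · intro x _ hx
      simp [Ne.symm hx]
    · simp
  rw [hM]
  exact Matrix.posSemidef_self_mul_conjTranspose _

theorem Xgen_entries {k : ℕ} (ξ η ζ : Fin k → ℂ) (lam mu : ℝ) (h1 : (lam : ℂ) * (mu : ℂ) = 1)
    (h2 : (mu : ℂ) * (lam : ℂ) = 1) (hξ : ip ξ ξ = 1) (hη : ip η η = 1) (hζ : ip ζ ζ = 1) :
    ∀ i j, Xgen ξ η ζ lam mu i j =
      if (![0, 1, 2, 1, 0, 3, 2, 3, 0] : Fin 9 → Fin 4) i = (![0, 1, 2, 1, 0, 3, 2, 3, 0] : Fin 9 → Fin 4) j then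
        (((![1, lam, mu, mu, 1, lam, lam, mu, 1] : Fin 9 → ℝ) i : ℝ) : ℂ) *
        (((![1, lam, mu, mu, 1, lam, lam, mu, 1] : Fin 9 → ℝ) j : ℝ) : ℂ) *
        ip ((![ξ, η, ζ, ξ, ξ, ζ, ξ, η, ξ] : Fin 9 → Fin k → ℂ) i)
          ((![ξ, η, ζ, ξ, ξ, ζ, ξ, η, ξ] : Fin 9 → Fin k → ℂ) j) else 0 := by
  intro i j
  fin_cases i <;> fin_cases j <;> simp [Xgen, h1, h2, hξ, hη, hζ, pow_two]

/-- The partial transpose written out entrywise. -/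
theorem pt9_eq (X : Matrix (Fin 9) (Fin 9) ℂ) : pt9 X =
  !![X 0 0, X 0 1, X 0 2, X 3 0, X 3 1, X 3 2, X 6 0, X 6 1, X 6 2;
     X 1 0, X 1 1, X 1 2, X 4 0, X 4 1, X 4 2, X 7 0, X 7 1, X 7 2;
     X 2 0, X 2 1, X 2 2, X 5 0, X 5 1, X 5 2, X 8 0, X 8 1, X 8 2;
     X 0 3, X 0 4, X 0 5, X 3 3, X 3 4, X 3 5, X 6 3, X 6 4, X 6 5;
     X 1 3, X 1 4, X 1 5, X 4 3, X 4 4, X 4 5, X 7 3, X 7 4, X 7 5;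
     X 2 3, X 2 4, X 2 5, X 5 3, X 5 4, X 5 5, X 8 3, X 8 4, X 8 5;
     X 0 6, X 0 7, X 0 8, X 3 6, X 3 7, X 3 8, X 6 6, X 6 7, X 6 8;
     X 1 6, X 1 7, X 1 8, X 4 6, X 4 7, X 4 8, X 7 6, X 7 7, X 7 8;
     X 2 6, X 2 7, X 2 8, X 5 6, X 5 7, X 5 8, X 8 6, X 8 7, X 8 8] := by
  ext i j
  fin_cases i <;> fin_cases j <;> rfl

/-- The partial transpose of `Xgen` written out. -/
theorem pt9_Xgen {k : ℕ} (ξ η ζ : Fin k → ℂ) (lam mu : ℝ) : pt9 (Xgen ξ η ζ lam mu) =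
  !![1, 0, 0, 0, ip ξ η, 0, 0, 0, ip ξ ζ;
     0, (lam : ℂ)^2, 0, 1, 0, 0, 0, 0, 0;
     0, 0, (mu : ℂ)^2, 0, 0, 0, 1, 0, 0;
     0, 1, 0, (mu : ℂ)^2, 0, 0, 0, 0, 0;
     ip η ξ, 0, 0, 0, 1, 0, 0, 0, ip η ζ;
     0, 0, 0, 0, 0, (lam : ℂ)^2, 0, 1, 0;
     0, 0, 1, 0, 0, 0, (lam : ℂ)^2, 0, 0;
     0, 0, 0, 0, 0, 1, 0, (mu : ℂ)^2, 0;
     ip ζ ξ, 0, 0, 0, ip ζ η, 0, 0, 0, 1] := by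
  rw [pt9_eq]
  simp [Xgen]

theorem pt9_entries {k : ℕ} (ξ η ζ : Fin k → ℂ) (lam mu : ℝ) (h1 : (lam : ℂ) * (mu : ℂ) = 1)
    (h2 : (mu : ℂ) * (lam : ℂ) = 1) (hξ : ip ξ ξ = 1) (hη : ip η η = 1) (hζ : ip ζ ζ = 1) :
    ∀ i j, pt9 (Xgen ξ η ζ lam mu) i j =
      if (![0, 1, 2, 1, 0, 3, 2, 3, 0] : Fin 9 → Fin 4) i = (![0, 1, 2, 1, 0, 3, 2, 3, 0] : Fin 9 → Fin 4) j then
        (((![1, lam, mu, mu, 1, lam, lam, mu, 1] : Fin 9 → ℝ) i : ℝ) : ℂ) *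
        (((![1, lam, mu, mu, 1, lam, lam, mu, 1] : Fin 9 → ℝ) j : ℝ) : ℂ) *
        ip ((![ξ, ξ, ξ, ξ, η, ξ, ξ, ξ, ζ] : Fin 9 → Fin k → ℂ) i)
          ((![ξ, ξ, ξ, ξ, η, ξ, ξ, ξ, ζ] : Fin 9 → Fin k → ℂ) j) else 0 := by
  rw [pt9_Xgen]
  intro i j
  fin_cases i <;> fin_cases j <;> simp [h1, h2, hξ, hη, hζ, pow_two]

/-- For unit vectors `ξ, η, ζ` and `λ > 0`, `μ = 1/λ`, the matrix `X(ξ,η,ζ;λ)` and its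
partial transpose are positive semidefinite, i.e. `X` is a PPT matrix. -/
theorem Xgen_isPPT (k : ℕ) (hk : 1 ≤ k) (lam mu : ℝ) (hlam : 0 < lam) (hmu : mu = 1 / lam)
    (ξ η ζ : Fin k → ℂ) (hξ : ip ξ ξ = 1) (hη : ip η η = 1) (hζ : ip ζ ζ = 1) :
    (Xgen ξ η ζ lam mu).PosSemidef ∧ (pt9 (Xgen ξ η ζ lam mu)).PosSemidef := by
  have hl : (lam : ℂ) ≠ 0 := by exact_mod_cast hlam.ne'
  have h1 : (lam : ℂ) * (mu : ℂ) = 1 := by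
    rw [hmu]; push_cast; field_simp
  have h2 : (mu : ℂ) * (lam : ℂ) = 1 := by rw [mul_comm, h1]
  exact ⟨gram_block_posSemidef _ _ _ _ (Xgen_entries ξ η ζ lam mu h1 h2 hξ hη hζ),
    gram_block_posSemidef _ _ _ _ (pt9_entries ξ η ζ lam mu h1 h2 hξ hη hζ)⟩
end

section
/- Let k ≥ 1, λ > 0, μ = 1/λ, let ξ, η, ζ ∈ ℂ^k be unit vectors, and let X = X(ξ,η,ζ;λ) be the 9×9 matrix with nonzero entries X₁₁ = X₅₅ = X₉₉ = X₁₅ = X₅₁ = X₁₉ = X₉₁ = X₅₉ = X₉₅ = 1; X₂₂ = X₆₆ = X₇₇ = λ²; X₃₃ = X₄₄ = X₈₈ = μ²; X₂₄ = ⟨η,ξ⟩, X₄₂ = ⟨ξ,η⟩; X₃₇ = ⟨ζ,ξ⟩, X₇₃ = ⟨ξ,ζ⟩; X₆₈ = ⟨ζ,η⟩, X₈₆ = ⟨η,ζ⟩ (all other entries 0). Then the rank of X equals 1 + rank G(ξ,η) + rank G(η,ζ) + rank G(ζ,ξ), where G(u,v) denotes the 2×2 Gram matrix [[⟨u,u⟩,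 ⟨u,v⟩],[⟨v,u⟩, ⟨v,v⟩]]. -/
open Matrix Complex
open scoped ComplexOrder

/-- The `2 × 2` Gram matrix of `u, v`. -/
noncomputable def gram2 {k : ℕ} (u v : Fin k → ℂ) : Matrix (Fin 2) (Fin 2) ℂ :=
  !![ip u u, ip u v; ip v u, ip v v]

def subProdEquiv {V W : Type*} [AddCommGroup V] [AddCommGroup W] [Module ℂ V] [Module ℂ W]
    (p : Submodule ℂ V) (q : Submodule ℂ W) : (p.prod q) ≃ₗ[ℂ] p × q where
  toFun x := (⟨x.1.1, x.2.1⟩, ⟨x.1.2, x.2.2⟩)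
  invFun x := ⟨(x.1.1, x.2.1), ⟨x.1.2, x.2.2⟩⟩
  left_inv _ := rfl
  right_inv _ := rfl
  map_add' _ _ := rfl
  map_smul' _ _ := rfl

open Matrix in
lemma rank_diagBlocks {m n : Type*} [Fintype m] [Fintype n]
    (A : Matrix m m ℂ) (D : Matrix n n ℂ) :
    (Matrix.fromBlocks A 0 0 D).rank = A.rank + D.rank := by
  have key : (LinearMap.range (Matrix.fromBlocks A 0 0 D).mulVecLin).map
      (LinearEquiv.sumArrowLequivProdArrow m n ℂ ℂ).toLinearMap
      = (LinearMap.range A.mulVecLin).prod (LinearMap.range D.mulVecLin) := by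
    ext ⟨x, y⟩
    simp only [Submodule.mem_map, LinearMap.mem_range, Submodule.mem_prod, mulVecLin_apply]
    constructor
    · rintro ⟨_, ⟨v, rfl⟩, h⟩
      rw [Matrix.fromBlocks_mulVec] at h
      simp only [zero_mulVec, add_zero, zero_add] at h
      have h1 := congrArg Prod.fst h
      have h2 := congrArg Prod.snd h
      exact ⟨⟨v ∘ Sum.inl, h1⟩, ⟨v ∘ Sum.inr, h2⟩⟩
    · rintro ⟨⟨v, rfl⟩, ⟨w, rfl⟩⟩
      refine ⟨_, ⟨Sum.elim v w, rfl⟩, ?_⟩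
      rw [Matrix.fromBlocks_mulVec]
      simp only [zero_mulVec, add_zero, zero_add, Sum.elim_comp_inl, Sum.elim_comp_inr]
      rfl
  unfold Matrix.rank
  rw [← LinearEquiv.finrank_map_eq (LinearEquiv.sumArrowLequivProdArrow m n ℂ ℂ)]
  refine (congrArg (fun S : Submodule ℂ ((m → ℂ) × (n → ℂ)) => Module.finrank ℂ S) key).trans ?_
  rw [(subProdEquiv _ _).finrank_eq, Module.finrank_prod]

lemma rank_scaled (a b p q : ℂ) (h : p * q = 1) :
    (!![p ^ 2, a; b, q ^ 2] : Matrix (Fin 2) (Fin 2) ℂ).rank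
      = (!![1, a; b, 1] : Matrix (Fin 2) (Fin 2) ℂ).rank := by
  have hd : (!![p, 0; 0, q] : Matrix (Fin 2) (Fin 2) ℂ).det ≠ 0 := by
    simp [Matrix.det_fin_two, h]
  have : (!![p ^ 2, a; b, q ^ 2] : Matrix (Fin 2) (Fin 2) ℂ)
      = !![p, 0; 0, q] * !![1, a; b, 1] * !![p, 0; 0, q] := by
    ext i j
    fin_cases i <;> fin_cases j <;> simp [Matrix.mul_apply, Fin.sum_univ_two] <;>
      first | ring1 | linear_combination (-a) * h | linear_combination (-b) * h
  rw [this, Matrix.rank_mul_eq_left_of_det_ne_zero _ _ hd,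
    Matrix.rank_mul_eq_right_of_det_ne_zero _ _ hd]

lemma rank_swap (a b : ℂ) :
    (!![1, a; b, 1] : Matrix (Fin 2) (Fin 2) ℂ).rank
      = (!![1, b; a, 1] : Matrix (Fin 2) (Fin 2) ℂ).rank := by
  rw [← Matrix.rank_transpose]
  congr 1
  ext i j
  fin_cases i <;> fin_cases j <;> rfl

lemma rank_ones : (Matrix.of fun _ _ => 1 : Matrix (Fin 3) (Fin 3) ℂ).rank = 1 := by
  apply le_antisymm
  · have : (Matrix.of fun _ _ => 1 : Matrix (Fin 3) (Fin 3) ℂ)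
        = Matrix.vecMulVec (fun _ => 1) (fun _ => 1) := by
      ext i j; simp [Matrix.vecMulVec_apply]
    rw [this]
    exact Matrix.rank_vecMulVec_le _ _
  · have h := Matrix.rank_submatrix_le (Matrix.of fun _ _ => 1 : Matrix (Fin 3) (Fin 3) ℂ)
      (fun _ : Fin 1 => (0 : Fin 3)) (fun _ : Fin 1 => (0 : Fin 3))
    have h1 : (Matrix.of fun _ _ => 1 : Matrix (Fin 3) (Fin 3) ℂ).submatrix
      (fun _ : Fin 1 => (0 : Fin 3)) (fun _ : Fin 1 => (0 : Fin 3)) = 1 := by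
      ext i j
      fin_cases i; fin_cases j; rfl
    rw [h1, Matrix.rank_one] at h
    simpa using h

def idx9 : (Fin 3 ⊕ Fin 2) ⊕ (Fin 2 ⊕ Fin 2) → Fin 9 :=
  Sum.elim (Sum.elim ![0, 4, 8] ![1, 3]) (Sum.elim ![5, 7] ![2, 6])

lemma idx9_bij : Function.Bijective idx9 := by
  constructor
  · unfold Function.Injective; decide
  · unfold Function.Surjective; decide

/-- `rank X = 1 + rank G(ξ,η) + rank G(η,ζ) + rank G(ζ,ξ)`. -/
theorem Xgen_rank (k : ℕ) (hk : 1 ≤ k) (lam mu : ℝ) (hlam : 0 < lam) (hmu : mu = 1 / lam)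
    (ξ η ζ : Fin k → ℂ) (hξ : ip ξ ξ = 1) (hη : ip η η = 1) (hζ : ip ζ ζ = 1) :
    (Xgen ξ η ζ lam mu).rank =
      1 + (gram2 ξ η).rank + (gram2 η ζ).rank + (gram2 ζ ξ).rank := by
  have hlm : (lam : ℂ) * (mu : ℂ) = 1 := by
    rw [hmu, ← Complex.ofReal_mul, mul_one_div_cancel hlam.ne', Complex.ofReal_one]
  have hml : (mu : ℂ) * (lam : ℂ) = 1 := by rw [mul_comm, hlm]
  have hX : (Xgen ξ η ζ lam mu).submatrix (Equiv.ofBijective idx9 idx9_bij)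
      (Equiv.ofBijective idx9 idx9_bij)
      = Matrix.fromBlocks
        (Matrix.fromBlocks (Matrix.of fun _ _ => 1) 0 0
          !![(lam : ℂ) ^ 2, ip η ξ; ip ξ η, (mu : ℂ) ^ 2]) 0 0
        (Matrix.fromBlocks !![(lam : ℂ) ^ 2, ip ζ η; ip η ζ, (mu : ℂ) ^ 2] 0 0
          !![(mu : ℂ) ^ 2, ip ζ ξ; ip ξ ζ, (lam : ℂ) ^ 2]) := by
    ext i j
    rcases i with (i | i) | (i | i) <;> rcases j with (j | j) | (j | j) <;>
      fin_cases i <;> fin_cases j <;> rfl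
  rw [← Matrix.rank_submatrix _ (Equiv.ofBijective idx9 idx9_bij)
      (Equiv.ofBijective idx9 idx9_bij), hX, rank_diagBlocks, rank_diagBlocks, rank_diagBlocks,
    rank_ones, rank_scaled _ _ _ _ hlm, rank_scaled _ _ _ _ hlm, rank_scaled _ _ _ _ hml,
    rank_swap (ip η ξ), rank_swap (ip ζ η)]
  simp only [gram2, hξ, hη, hζ]
  ring
end

section
/- Let k ≥ 1, λ > 0, μ = 1/λ, let ξ, η, ζ ∈ ℂ^k be unit vectors, and let X = X(ξ,η,ζ;λ) be the 9×9 matrix with nonzero entries X₁₁ = X₅₅ = X₉₉ = X₁₅ = X₅₁ = X₁₉ = X₉₁ = X₅₉ = X₉₅ = 1; X₂₂ = X₆₆ = X₇₇ = λ²; X₃₃ = X₄₄ = X₈₈ = μ²; X₂₄ = ⟨η,ξ⟩, X₄₂ = ⟨ξ,η⟩; X₃₇ = ⟨ζ,ξ⟩, X₇₃ = ⟨ξ,ζ⟩; X₆₈ = ⟨ζ,η⟩, X₈₆ = ⟨η,ζ⟩ (all other entries 0). Then the rank of the partial transpose X^τ equals 3 + rank G(ξ,η,ζ), where G(ξ,η,ζ)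 is the 3×3 Gram matrix [[⟨ξ,ξ⟩,⟨ξ,η⟩,⟨ξ,ζ⟩],[⟨η,ξ⟩,⟨η,η⟩,⟨η,ζ⟩],[⟨ζ,ξ⟩,⟨ζ,η⟩,⟨ζ,ζ⟩]]. -/
open Matrix Complex
open scoped ComplexOrder

/-- The `3 × 3` Gram matrix of `ξ, η, ζ`. -/
noncomputable def gram3 {k : ℕ} (ξ η ζ : Fin k → ℂ) : Matrix (Fin 3) (Fin 3) ℂ :=
  !![ip ξ ξ, ip ξ η, ip ξ ζ;
     ip η ξ, ip η η, ip η ζ;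
     ip ζ ξ, ip ζ η, ip ζ ζ]

/-- Selecting the three Gram coordinates and the three combinations seen by the `2 × 2` blocks. -/
noncomputable def selMap (l m : ℂ) : (Fin 9 → ℂ) →ₗ[ℂ] (Fin 3 → ℂ) × (Fin 3 → ℂ) where
  toFun v := (![v 0, v 4, v 8], ![l ^ 2 * v 1 + v 3, m ^ 2 * v 2 + v 6, l ^ 2 * v 5 + v 7])
  map_add' u v := by
    ext i <;> fin_cases i <;> simp <;> ring
  map_smul' c v := by
    ext i <;> fin_cases i <;> simp <;> ring

/-- Re-embedding into the nine coordinates. -/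
noncomputable def embMap (l m : ℂ) : (Fin 3 → ℂ) × (Fin 3 → ℂ) →ₗ[ℂ] (Fin 9 → ℂ) where
  toFun p := ![p.1 0, p.2 0, p.2 1, m ^ 2 * p.2 0, p.1 1, p.2 2, l ^ 2 * p.2 1,
    m ^ 2 * p.2 2, p.1 2]
  map_add' u v := by
    ext i; fin_cases i <;> simp <;> ring
  map_smul' c v := by
    ext i; fin_cases i <;> simp <;> ring

theorem selMap_range (l m : ℂ) : LinearMap.range (selMap l m) = ⊤ := by
  rw [LinearMap.range_eq_top]
  rintro ⟨a, b⟩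
  refine ⟨![a 0, 0, 0, b 0, a 1, 0, b 1, b 2, a 2], ?_⟩
  ext i <;> fin_cases i <;> simp [selMap]

theorem embMap_injective (l m : ℂ) : Function.Injective (embMap l m) := by
  rintro ⟨a, b⟩ ⟨c, d⟩ h
  have h' := fun i => congrFun h i
  have h0 := h' 0
  have h1 := h' 1
  have h2 := h' 2
  have h4 := h' 4
  have h5 := h' 5
  have h8 := h' 8
  simp [embMap] at h0 h1 h2 h4 h5 h8
  ext i <;> fin_cases i <;> simpa

theorem pt_factor {k : ℕ} (ξ η ζ : Fin k → ℂ) (lam mu : ℝ) (h : (lam : ℂ) * mu = 1)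
    (hξ : ip ξ ξ = 1) (hη : ip η η = 1) (hζ : ip ζ ζ = 1) :
    (pt9 (Xgen ξ η ζ lam mu)).mulVecLin =
      embMap lam mu ∘ₗ ((gram3 ξ η ζ).mulVecLin.prodMap LinearMap.id) ∘ₗ selMap lam mu := by
  have h2 : (mu : ℂ) ^ 2 * (lam : ℂ) ^ 2 = 1 := by
    rw [← mul_pow, mul_comm, h, one_pow]
  refine LinearMap.ext fun v => ?_
  ext i
  fin_cases i <;>
    simp [embMap, selMap, pt9, Xgen, gram3, Matrix.mulVec, dotProduct, Fin.sum_univ_succ,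
      hξ, hη, hζ] <;>
    first
    | ring1
    | linear_combination (-v 1) * h2
    | linear_combination (-v 2) * h2
    | linear_combination (-v 5) * h2

/-- `rank X^τ = 3 + rank G(ξ,η,ζ)`. -/
theorem Xgen_pt_rank (k : ℕ) (hk : 1 ≤ k) (lam mu : ℝ) (hlam : 0 < lam) (hmu : mu = 1 / lam)
    (ξ η ζ : Fin k → ℂ) (hξ : ip ξ ξ = 1) (hη : ip η η = 1) (hζ : ip ζ ζ = 1) :
    (pt9 (Xgen ξ η ζ lam mu)).rank = 3 + (gram3 ξ η ζ).rank := by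
  have h : (lam : ℂ) * mu = 1 := by
    rw [hmu]
    push_cast
    field_simp
  have e : (gram3 ξ η ζ).rank = Module.finrank ℂ (LinearMap.range (gram3 ξ η ζ).mulVecLin) := rfl
  rw [e, Matrix.rank, pt_factor ξ η ζ lam mu h hξ hη hζ, ← LinearMap.comp_assoc,
    LinearMap.range_comp_of_range_eq_top _ (selMap_range _ _), LinearMap.range_comp,
    LinearMap.range_prodMap]
  have e2 : (LinearMap.range (gram3 ξ η ζ).mulVecLin).prod
      (LinearMap.range (LinearMap.id : (Fin 3 → ℂ) →ₗ[ℂ] (Fin 3 → ℂ))) =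
      LinearMap.range ((LinearMap.range (gram3 ξ η ζ).mulVecLin).subtype.prodMap
        (LinearMap.id : (Fin 3 → ℂ) →ₗ[ℂ] (Fin 3 → ℂ))) := by
    rw [LinearMap.range_prodMap, Submodule.range_subtype]
  rw [e2, ← LinearMap.range_comp, LinearMap.finrank_range_of_inj, Module.finrank_prod,
    Module.finrank_fin_fun, add_comm]
  rw [LinearMap.coe_comp, LinearMap.coe_prodMap]
  exact (embMap_injective _ _).comp
    (Function.Injective.prodMap (Submodule.subtype_injective _) Function.injective_id)
end

section
/- Let λ > 0, λ ≠ 1, μ = 1/λ, and in ℂ³ take ξ = e₁, η = e₂, ζ = e₃. Let X = X(ξ,η,ζ;λ) be the 9×9 matrix with nonzero entries X₁₁ = X₅₅ = X₉₉ = X₁₅ = X₅₁ = X₁₉ = X₉₁ = X₅₉ = X₉₅ = 1; X₂₂ = X₆₆ = X₇₇ = λ²; X₃₃ = X₄₄ = X₈₈ = μ² (all other entries 0, since the inner products ⟨η,ξ⟩, ⟨ζ,ξ⟩, ⟨ζ,η⟩ vanish). Then X and its partial transpose X^τ are positive semidefinite, rank X = 7, and rank X^τ = 6. -/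
open Matrix Complex
open scoped ComplexOrder

/-- The matrix `X(e₁,e₂,e₃;λ)` (with `μ = 1/λ`): here the inner products
`⟨η,ξ⟩, ⟨ζ,ξ⟩, ⟨ζ,η⟩` all vanish. -/
def X10 (lam mu : ℝ) : Matrix (Fin 9) (Fin 9) ℂ :=
  !![1, 0, 0, 0, 1, 0, 0, 0, 1;
     0, (lam : ℂ)^2, 0, 0, 0, 0, 0, 0, 0;
     0, 0, (mu : ℂ)^2, 0, 0, 0, 0, 0, 0;
     0, 0, 0, (mu : ℂ)^2, 0, 0, 0, 0, 0;
     1, 0, 0, 0, 1, 0, 0, 0, 1;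
     0, 0, 0, 0, 0, (lam : ℂ)^2, 0, 0, 0;
     0, 0, 0, 0, 0, 0, (lam : ℂ)^2, 0, 0;
     0, 0, 0, 0, 0, 0, 0, (mu : ℂ)^2, 0;
     1, 0, 0, 0, 1, 0, 0, 0, 1]

/-- A Gram matrix with a right-invertible factor is positive semidefinite of full rank. -/
theorem gram_aux {k : ℕ} (A : Matrix (Fin k) (Fin 9) ℂ) (B : Matrix (Fin 9) (Fin k) ℂ)
    (X : Matrix (Fin 9) (Fin 9) ℂ) (hX : X = Aᴴ * A) (hAB : A * B = 1) :
    X.PosSemidef ∧ X.rank = k := by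
  subst hX
  refine ⟨Matrix.posSemidef_conjTranspose_mul_self A, ?_⟩
  rw [Matrix.rank_conjTranspose_mul_self]
  apply le_antisymm
  · simpa using Matrix.rank_le_height A
  · have h := Matrix.rank_mul_le_left A B
    rw [hAB, Matrix.rank_one] at h
    simpa using h

def facA (l m : ℂ) : Matrix (Fin 7) (Fin 9) ℂ :=
  !![1, 0, 0, 0, 1, 0, 0, 0, 1;
     0, l, 0, 0, 0, 0, 0, 0, 0;
     0, 0, m, 0, 0, 0, 0, 0, 0;
     0, 0, 0, m, 0, 0, 0, 0, 0;
     0, 0, 0, 0, 0, l, 0, 0, 0;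
     0, 0, 0, 0, 0, 0, l, 0, 0;
     0, 0, 0, 0, 0, 0, 0, m, 0]

def invA (l m : ℂ) : Matrix (Fin 9) (Fin 7) ℂ :=
  !![1, 0, 0, 0, 0, 0, 0;
     0, m, 0, 0, 0, 0, 0;
     0, 0, l, 0, 0, 0, 0;
     0, 0, 0, l, 0, 0, 0;
     0, 0, 0, 0, 0, 0, 0;
     0, 0, 0, 0, m, 0, 0;
     0, 0, 0, 0, 0, m, 0;
     0, 0, 0, 0, 0, 0, l;
     0, 0, 0, 0, 0, 0, 0]

def facC (l m : ℂ) : Matrix (Fin 6) (Fin 9) ℂ :=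
  !![1, 0, 0, 0, 0, 0, 0, 0, 0;
     0, 0, 0, 0, 1, 0, 0, 0, 0;
     0, 0, 0, 0, 0, 0, 0, 0, 1;
     0, l, 0, m, 0, 0, 0, 0, 0;
     0, 0, m, 0, 0, 0, l, 0, 0;
     0, 0, 0, 0, 0, l, 0, m, 0]

def invC (m : ℂ) : Matrix (Fin 9) (Fin 6) ℂ :=
  !![1, 0, 0, 0, 0, 0;
     0, 0, 0, m, 0, 0;
     0, 0, 0, 0, 0, 0;
     0, 0, 0, 0, 0, 0;
     0, 1, 0, 0, 0, 0;
     0, 0, 0, 0, 0, m;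
     0, 0, 0, 0, m, 0;
     0, 0, 0, 0, 0, 0;
     0, 0, 1, 0, 0, 0]

def Y10 (l m : ℂ) : Matrix (Fin 9) (Fin 9) ℂ :=
  !![1, 0, 0, 0, 0, 0, 0, 0, 0;
     0, l^2, 0, 1, 0, 0, 0, 0, 0;
     0, 0, m^2, 0, 0, 0, 1, 0, 0;
     0, 1, 0, m^2, 0, 0, 0, 0, 0;
     0, 0, 0, 0, 1, 0, 0, 0, 0;
     0, 0, 0, 0, 0, l^2, 0, 1, 0;
     0, 0, 1, 0, 0, 0, l^2, 0, 0;
     0, 0, 0, 0, 0, 1, 0, m^2, 0;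
     0, 0, 0, 0, 0, 0, 0, 0, 1]

theorem pt9_apply (X : Matrix (Fin 9) (Fin 9) ℂ) (i j a b : Fin 9)
    (ha : 3 * ((j : ℕ) / 3) + (i : ℕ) % 3 = a) (hb : 3 * ((i : ℕ) / 3) + (j : ℕ) % 3 = b) :
    pt9 X i j = X a b := by
  unfold pt9
  rw [Matrix.of_apply]
  exact congrArg₂ X (Fin.ext ha) (Fin.ext hb)

theorem pt9_X10 (lam mu : ℝ) : pt9 (X10 lam mu) = Y10 lam mu := by
  rw [pt9_eq]
  simp [X10, Y10]

set_option maxHeartbeats 2000000 in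
theorem X10_fac (lam mu : ℝ) : X10 lam mu = (facA lam mu)ᴴ * facA lam mu := by
  ext i j
  rw [Matrix.mul_apply]
  simp only [Matrix.conjTranspose_apply, Fin.sum_univ_seven]
  fin_cases i <;> fin_cases j <;> simp [X10, facA, sq]

set_option maxHeartbeats 2000000 in
theorem facA_inv (l m : ℂ) (hlm : l * m = 1) (hml : m * l = 1) :
    facA l m * invA l m = 1 := by
  ext i j
  rw [Matrix.mul_apply]
  simp only [Fin.sum_univ_succ]
  fin_cases i <;> fin_cases j <;> simp [facA, invA, hlm, hml]

set_option maxHeartbeats 2000000 in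
theorem Y10_fac (lam mu : ℝ) (hlm : (lam : ℂ) * mu = 1) (hml : (mu : ℂ) * lam = 1) :
    Y10 lam mu = (facC lam mu)ᴴ * facC lam mu := by
  ext i j
  rw [Matrix.mul_apply]
  simp only [Matrix.conjTranspose_apply, Fin.sum_univ_six]
  fin_cases i <;> fin_cases j <;> simp [Y10, facC, sq, hlm, hml]

set_option maxHeartbeats 2000000 in
theorem facC_inv (l m : ℂ) (hlm : l * m = 1) :
    facC l m * invC m = 1 := by
  ext i j
  rw [Matrix.mul_apply]
  simp only [Fin.sum_univ_succ]
  fin_cases i <;> fin_cases j <;> simp [facC, invC, hlm]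

/-- With `ξ = e₁, η = e₂, ζ = e₃`: `X` is PPT with `rank X = 7` and `rank X^τ = 6`
(a `(7,6)` edge state). -/
theorem X10_ppt_rank (lam mu : ℝ) (h0 : 0 < lam) (h1 : lam ≠ 1) (hmu : mu = 1 / lam) :
    (X10 lam mu).PosSemidef ∧ (pt9 (X10 lam mu)).PosSemidef ∧
      (X10 lam mu).rank = 7 ∧ (pt9 (X10 lam mu)).rank = 6 := by
  have hlm : (lam : ℂ) * mu = 1 := by
    rw [hmu]; push_cast
    have : (lam : ℂ) ≠ 0 := by exact_mod_cast h0.ne'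
    field_simp
  have hml : (mu : ℂ) * lam = 1 := by rw [mul_comm]; exact hlm
  have hA := gram_aux (facA lam mu) (invA lam mu) (X10 lam mu) (X10_fac lam mu)
    (facA_inv _ _ hlm hml)
  have hC := gram_aux (facC lam mu) (invC mu) (pt9 (X10 lam mu))
    ((pt9_X10 lam mu).trans (Y10_fac lam mu hlm hml)) (facC_inv _ _ hlm)
  exact ⟨hA.1, hC.1, hA.2, hC.2⟩
end

section
/- Let λ > 0, λ ≠ 1, μ = 1/λ, and take ξ = η = ζ = e₁ in ℂ³. Let X be the 9×9 matrix with nonzero entries X₁₁ = X₅₅ = X₉₉ = X₁₅ = X₅₁ = X₁₉ = X₉₁ = X₅₉ = X₉₅ = 1; X₂₂ = X₆₆ = X₇₇ = λ²; X₃₃ = X₄₄ = X₈₈ = μ²; X₂₄ = X₄₂ = X₃₇ = X₇₃ = X₆₈ = X₈₆ = 1 (all other entries 0). Then X and its partial transpose X^τ are positive semidefinite, rank X = 4, and rank X^τ = 4. -/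
open Matrix Complex
open scoped ComplexOrder

/-- The matrix `X(e₁, e₁, e₁; λ)` (with `μ = 1/λ`): all the inner products
`⟨η,ξ⟩, ⟨ζ,ξ⟩, ⟨ζ,η⟩` equal `1`. -/
def X13 (lam mu : ℝ) : Matrix (Fin 9) (Fin 9) ℂ :=
  !![1, 0, 0, 0, 1, 0, 0, 0, 1;
     0, (lam : ℂ)^2, 0, 1, 0, 0, 0, 0, 0;
     0, 0, (mu : ℂ)^2, 0, 0, 0, 1, 0, 0;
     0, 1, 0, (mu : ℂ)^2, 0, 0, 0, 0, 0;
     1, 0, 0, 0, 1, 0, 0, 0, 1;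
     0, 0, 0, 0, 0, (lam : ℂ)^2, 0, 1, 0;
     0, 0, 1, 0, 0, 0, (lam : ℂ)^2, 0, 0;
     0, 0, 0, 0, 0, 1, 0, (mu : ℂ)^2, 0;
     1, 0, 0, 0, 1, 0, 0, 0, 1]

/-- The factor `A` with `X = Aᴴ A`. -/
def X13A (lam mu : ℝ) : Matrix (Fin 4) (Fin 9) ℂ :=
  !![1, 0, 0, 0, 1, 0, 0, 0, 1;
     0, (lam : ℂ), 0, (mu : ℂ), 0, 0, 0, 0, 0;
     0, 0, (mu : ℂ), 0, 0, 0, (lam : ℂ), 0, 0;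
     0, 0, 0, 0, 0, (lam : ℂ), 0, (mu : ℂ), 0]

/-- A right inverse of `A`. -/
def X13B (mu : ℝ) : Matrix (Fin 9) (Fin 4) ℂ :=
  !![1, 0, 0, 0;
     0, (mu : ℂ), 0, 0;
     0, 0, 0, 0;
     0, 0, 0, 0;
     0, 0, 0, 0;
     0, 0, 0, (mu : ℂ);
     0, 0, (mu : ℂ), 0;
     0, 0, 0, 0;
     0, 0, 0, 0]

theorem pt9_X13 (lam mu : ℝ) : pt9 (X13 lam mu) = X13 lam mu := by
  ext i j
  fin_cases i <;> fin_cases j <;> rfl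

theorem X13_factor (lam mu : ℝ) (h : (lam : ℂ) * mu = 1) :
    X13 lam mu = (X13A lam mu)ᴴ * X13A lam mu := by
  have h' : (mu : ℂ) * lam = 1 := by rw [mul_comm]; exact h
  ext i j
  fin_cases i <;> fin_cases j <;>
    simp [X13, X13A, Matrix.mul_apply, Fin.sum_univ_four, h, h', sq]

theorem X13_right_inv (lam mu : ℝ) (h : (lam : ℂ) * mu = 1) :
    X13A lam mu * X13B mu = 1 := by
  ext i j
  fin_cases i <;> fin_cases j <;>
    simp [X13A, X13B, Matrix.mul_apply, Fin.sum_univ_succ, h]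

/-- With `ξ = η = ζ = e₁`: `X` is PPT with `rank X = 4` and `rank X^τ = 4`
(a `(4,4)` edge state). -/
theorem X13_ppt_rank (lam mu : ℝ) (h0 : 0 < lam) (h1 : lam ≠ 1) (hmu : mu = 1 / lam) :
    (X13 lam mu).PosSemidef ∧ (pt9 (X13 lam mu)).PosSemidef ∧
      (X13 lam mu).rank = 4 ∧ (pt9 (X13 lam mu)).rank = 4 := by
  have h : (lam : ℂ) * mu = 1 := by
    have : lam * mu = 1 := by rw [hmu]; field_simp
    exact_mod_cast this
  have hp : (X13 lam mu).PosSemidef := by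
    rw [X13_factor lam mu h]; exact posSemidef_conjTranspose_mul_self _
  have hr : (X13 lam mu).rank = 4 := by
    rw [X13_factor lam mu h, rank_conjTranspose_mul_self]
    apply le_antisymm
    · simpa using rank_le_height (X13A lam mu)
    · have h2 := rank_mul_le_left (X13A lam mu) (X13B mu)
      rw [X13_right_inv lam mu h, rank_one] at h2
      simpa using h2
  rw [pt9_X13]
  exact ⟨hp, hp, hr, hr⟩
end

section
/- Let t > 1 be real, λ > 0, λ ≠ 1, μ = 1/λ, and let E_t ⊆ M₃(ℂ) be the 5-dimensional subspace spanned by t·e₁₁ + √(t/(t+1))·e₃₃, t·e₂₂ + √(t/(t+1))·e₃₃, λe₁₂ + μe₂₁, λe₂₃ + μe₃₂, and λe₃₁ + μe₁₃. Then a nonzero matrix z ∈ E_t has rank 1 if and only if z is a nonzero complex scalar multiple of one of the following six matrices: (t²+t)^{1/4}e₁₁ + μe₁₃ + λe₃₁ + (t²+t)^{-1/4}e₃₃; −(t²+t)^{1/4}e₁₁ + μe₁₃ + λe₃₁ − (t²+t)^{-1/4}e₃₃; (t²+t)^{1/4}e₂₂ + λe₂₃ + μe₃₂ + (t²+t)^{-1/4}e₃₃;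 −(t²+t)^{1/4}e₂₂ + λe₂₃ + μe₃₂ − (t²+t)^{-1/4}e₃₃; i·e₁₁ + λe₁₂ + μe₂₁ − i·e₂₂; −i·e₁₁ + λe₁₂ + μe₂₁ + i·e₂₂. -/
open Matrix Complex

/-- The `5`-dimensional subspace `E_t ⊆ M₃(ℂ)` spanned by `t·e₁₁ + √(t/(t+1))·e₃₃`,
`t·e₂₂ + √(t/(t+1))·e₃₃`, `λe₁₂ + μe₂₁`, `λe₂₃ + μe₃₂` and `λe₃₁ + μe₁₃`. -/
noncomputable def Et (t lam mu : ℝ) : Submodule ℂ (Matrix (Fin 3) (Fin 3) ℂ) :=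
  Submodule.span ℂ
    { !![(t : ℂ), 0, 0; 0, 0, 0; 0, 0, ((Real.sqrt (t / (t + 1)) : ℝ) : ℂ)],
      !![0, 0, 0; 0, (t : ℂ), 0; 0, 0, ((Real.sqrt (t / (t + 1)) : ℝ) : ℂ)],
      !![0, (lam : ℂ), 0; (mu : ℂ), 0, 0; 0, 0, 0],
      !![0, 0, 0; 0, 0, (lam : ℂ); 0, (mu : ℂ), 0],
      !![0, 0, (mu : ℂ); 0, 0, 0; (lam : ℂ), 0, 0] }

/-- All `2 × 2` minors of a matrix of rank one vanish. -/
lemma minor_zero {A : Matrix (Fin 3) (Fin 3) ℂ} (h : A.rank = 1) (i j k l : Fin 3) :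
    A i k * A j l - A i l * A j k = 0 := by
  by_contra hne
  have h2 : (A.submatrix ![i, j] ![k, l]).det = A i k * A j l - A i l * A j k := by
    rw [Matrix.det_fin_two]; rfl
  have hu : IsUnit (A.submatrix ![i, j] ![k, l]) := by
    rw [Matrix.isUnit_iff_isUnit_det, h2]
    exact isUnit_iff_ne_zero.mpr hne
  have h3 := Matrix.rank_of_isUnit _ hu
  have h4 := Matrix.rank_submatrix_le A ![i, j] ![k, l]
  simp only [Fintype.card_fin] at h3
  omega

/-- A nonzero outer product has rank one. -/
lemma rank_one_of_outer {A : Matrix (Fin 3) (Fin 3) ℂ} (h0 : A ≠ 0) (x y : Fin 3 → ℂ)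
    (h : A = Matrix.vecMulVec x y) : A.rank = 1 := by
  have h1 : A.rank ≤ 1 := h ▸ Matrix.rank_vecMulVec_le x y
  have h2 : A.rank ≠ 0 := by
    intro h3
    apply h0
    have h4 : A.mulVecLin.range = ⊥ := Submodule.finrank_eq_zero.mp h3
    have h5 : A.mulVecLin = 0 := LinearMap.range_eq_bot.mp h4
    ext i j
    have h6 := congrFun (LinearMap.congr_fun h5 (Pi.single j 1)) i
    simpa using h6
  omega

/-- Coordinates on the space `Et`. -/
lemma Et_coords {t lam mu : ℝ} {z : Matrix (Fin 3) (Fin 3) ℂ} (hz : z ∈ Et t lam mu) :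
    ∃ a b c d e : ℂ, z = !![t * a, lam * c, mu * e; mu * c, t * b, lam * d;
      lam * e, mu * d, ((Real.sqrt (t / (t + 1)) : ℝ) : ℂ) * (a + b)] := by
  unfold Et at hz
  simp only [Submodule.mem_span_insert, Submodule.mem_span_singleton] at hz
  obtain ⟨a, _, ⟨b, _, ⟨c, _, ⟨d, _, ⟨e, rfl⟩, rfl⟩, rfl⟩, rfl⟩, rfl⟩ := hz
  refine ⟨a, b, c, d, e, ?_⟩
  ext i j
  fin_cases i <;> fin_cases j <;> simp <;> ring

/-- If `p ^ 6 ≠ 1` (with `p q = 1`), two transposed minors force the product to vanish. -/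
lemma cross_zero {L M u v : ℂ} (hLM : L * M = 1) (hL6 : L ^ 6 ≠ 1)
    (h1 : L * u = M ^ 2 * v) (h2 : M * u = L ^ 2 * v) : u = 0 ∧ v = 0 := by
  have hv : v = 0 := by
    have h : (L ^ 6 - 1) * v = 0 := by
      linear_combination (-L ^ 4) * h2 + (L ^ 3 * M) * h1 +
        (v * (L ^ 2 * M ^ 2 + L * M + 1)) * hLM
    exact (mul_eq_zero.mp h).resolve_left (sub_ne_zero.mpr hL6)
  refine ⟨?_, hv⟩
  subst hv
  linear_combination (-u) * hLM + M * h1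

/-- A nonzero matrix `z ∈ E_t` has rank one if and only if `z` is a nonzero complex
scalar multiple of one of six explicit matrices. -/
theorem Et_rank_one_classification (t lam mu : ℝ) (ht : 1 < t) (hlam : 0 < lam)
    (h1 : lam ≠ 1) (hmu : mu = 1 / lam) :
    ∀ z ∈ Et t lam mu, z ≠ 0 →
      (z.rank = 1 ↔
        ∃ c : ℂ, c ≠ 0 ∧
          (z = c • !![(((t ^ 2 + t) ^ ((1 : ℝ) / 4) : ℝ) : ℂ), 0, (mu : ℂ);
                      0, 0, 0;
                      (lam : ℂ), 0, (((t ^ 2 + t) ^ (-(1 : ℝ) / 4) : ℝ) : ℂ)] ∨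
           z = c • !![(-((t ^ 2 + t) ^ ((1 : ℝ) / 4) : ℝ) : ℂ), 0, (mu : ℂ);
                      0, 0, 0;
                      (lam : ℂ), 0, (-((t ^ 2 + t) ^ (-(1 : ℝ) / 4) : ℝ) : ℂ)] ∨
           z = c • !![0, 0, 0;
                      0, (((t ^ 2 + t) ^ ((1 : ℝ) / 4) : ℝ) : ℂ), (lam : ℂ);
                      0, (mu : ℂ), (((t ^ 2 + t) ^ (-(1 : ℝ) / 4) : ℝ) : ℂ)] ∨
           z = c • !![0, 0, 0;
                      0, (-((t ^ 2 + t) ^ ((1 : ℝ) / 4) : ℝ) : ℂ), (lam : ℂ);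
                      0, (mu : ℂ), (-((t ^ 2 + t) ^ (-(1 : ℝ) / 4) : ℝ) : ℂ)] ∨
           z = c • !![Complex.I, (lam : ℂ), 0;
                      (mu : ℂ), -Complex.I, 0;
                      0, 0, 0] ∨
           z = c • !![-Complex.I, (lam : ℂ), 0;
                      (mu : ℂ), Complex.I, 0;
                      0, 0, 0])) := by
  intro z hz hz0
  set r : ℝ := (t ^ 2 + t) ^ ((1 : ℝ) / 4) with hr
  have hpos : 0 < t ^ 2 + t := by positivity
  have hr0 : 0 < r := Real.rpow_pos_of_pos hpos _
  have hrinv : (t ^ 2 + t) ^ (-(1 : ℝ) / 4) = r⁻¹ := by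
    rw [hr, ← Real.rpow_neg hpos.le]; norm_num
  have hr4 : r ^ 4 = t ^ 2 + t := by
    rw [hr, ← Real.rpow_natCast, ← Real.rpow_mul hpos.le]; norm_num
  rw [hrinv]
  obtain ⟨a, b, c, d, e, hzz⟩ := Et_coords hz
  set s : ℝ := Real.sqrt (t / (t + 1)) with hs
  have hs0 : 0 < s := Real.sqrt_pos.mpr (by positivity)
  have hs2 : s ^ 2 = t / (t + 1) := Real.sq_sqrt (by positivity)
  have hsr : s * r ^ 2 = t := by
    have h : (s * r ^ 2) ^ 2 = t ^ 2 := by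
      have : (s * r ^ 2) ^ 2 = s ^ 2 * r ^ 4 := by ring
      rw [this, hs2, hr4]; field_simp
    exact (pow_left_inj₀ (by positivity) (by positivity) two_ne_zero).mp h
  have hlm : lam * mu = 1 := by rw [hmu]; field_simp
  have hLM : (lam : ℂ) * mu = 1 := by exact_mod_cast hlm
  have hL6 : (lam : ℂ) ^ 6 ≠ 1 := by
    intro h
    have h' : lam ^ 6 = 1 := by exact_mod_cast h
    exact h1 ((pow_eq_one_iff_of_nonneg hlam.le (by norm_num)).mp h')
  have hSR : (s : ℂ) * (r : ℂ) ^ 2 = t := by exact_mod_cast hsr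
  have hrC : (r : ℂ) ≠ 0 := by exact_mod_cast hr0.ne'
  have hsC : (s : ℂ) ≠ 0 := by exact_mod_cast hs0.ne'
  have htC : (t : ℂ) ≠ 0 := by
    have : t ≠ 0 := by positivity
    exact_mod_cast this
  have hII : Complex.I * Complex.I = -1 := Complex.I_mul_I
  clear_value r s
  push_cast
  generalize (lam : ℂ) = L at *
  generalize (mu : ℂ) = M at *
  generalize (r : ℂ) = R at *
  generalize (s : ℂ) = S at *
  generalize (t : ℂ) = T at *
  have hRR : R * R⁻¹ = 1 := mul_inv_cancel₀ hrC
  constructor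
  · intro hrank
    have m := minor_zero hrank
    have p1 := m 0 1 0 1
    have p2 := m 0 2 0 2
    have p3 := m 1 2 1 2
    have q1 := m 0 1 0 2
    have q2 := m 0 2 0 1
    have q3 := m 0 1 1 2
    have q4 := m 1 2 0 1
    have q5 := m 0 2 1 2
    have q6 := m 1 2 0 2
    clear m
    simp [hzz] at p1 p2 p3 q1 q2 q3 q4 q5 q6
    have k1 : T ^ 2 * (a * b) = c ^ 2 := by linear_combination p1 + c ^ 2 * hLM
    have k2 : T * S * (a * (a + b)) = e ^ 2 := by linear_combination p2 + e ^ 2 * hLM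
    have k3 : T * S * (b * (a + b)) = d ^ 2 := by linear_combination p3 + d ^ 2 * hLM
    obtain ⟨u1, v1⟩ := cross_zero (u := T * a * d) (v := c * e) hLM hL6
      (by linear_combination q1) (by linear_combination q2)
    obtain ⟨u2, v2⟩ := cross_zero (u := T * b * e) (v := c * d) hLM hL6
      (by linear_combination -q4) (by linear_combination -q3)
    obtain ⟨u3, v3⟩ := cross_zero (u := S * c * (a + b)) (v := d * e) hLM hL6
      (by linear_combination q5) (by linear_combination q6)
    by_cases hc : c = 0
    · by_cases he : e = 0
      · by_cases hd : d = 0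
        · exfalso
          subst hc he hd
          have hab : a + b = 0 := by
            have : T * S * (a + b) ^ 2 = 0 := by linear_combination k2 + k3
            simpa [htC, hsC] using this
          have hb : b = -a := by linear_combination hab
          subst hb
          have ha : a = 0 := by simpa [htC] using k1
          subst ha
          apply hz0
          rw [hzz]
          ext i j
          fin_cases i <;> fin_cases j <;> simp
        · have ha : a = 0 := by simpa [htC, hd] using u1
          subst ha hc he
          have h : (S * R * b - d) * (S * R * b + d) = 0 := by
            linear_combination k3 + S * b ^ 2 * hSR
          rcases mul_eq_zero.mp h with h | h
          · refine ⟨d, hd, Or.inr (Or.inr (Or.inl ?_))⟩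
            rw [hzz]
            ext i j
            fin_cases i <;> fin_cases j <;> simp
            · linear_combination R * h - b * hSR
            · ring
            · ring
            · linear_combination R⁻¹ * h - S * b * hRR
          · refine ⟨d, hd, Or.inr (Or.inr (Or.inr (Or.inl ?_)))⟩
            rw [hzz]
            ext i j
            fin_cases i <;> fin_cases j <;> simp
            · linear_combination R * h - b * hSR
            · ring
            · ring
            · linear_combination R⁻¹ * h - S * b * hRR
      · have hb : b = 0 := by simpa [htC, he] using u2
        have hd : d = 0 := by simpa [he] using v3
        subst hb hc hd
        have h : (S * R * a - e) * (S * R * a + e) = 0 := by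
          linear_combination k2 + S * a ^ 2 * hSR
        rcases mul_eq_zero.mp h with h | h
        · refine ⟨e, he, Or.inl ?_⟩
          rw [hzz]
          ext i j
          fin_cases i <;> fin_cases j <;> simp
          · linear_combination R * h - a * hSR
          · ring
          · ring
          · linear_combination R⁻¹ * h - S * a * hRR
        · refine ⟨e, he, Or.inr (Or.inl ?_)⟩
          rw [hzz]
          ext i j
          fin_cases i <;> fin_cases j <;> simp
          · linear_combination R * h - a * hSR
          · ring
          · ring
          · linear_combination R⁻¹ * h - S * a * hRR
    · have he : e = 0 := by simpa [hc] using v1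
      have hd : d = 0 := by simpa [hc] using v2
      have hab : a + b = 0 := by simpa [hsC, hc] using u3
      have hb : b = -a := by linear_combination hab
      subst hb he hd
      have h : (T * a - c * Complex.I) * (T * a + c * Complex.I) = 0 := by
        linear_combination -k1 - c ^ 2 * hII
      rcases mul_eq_zero.mp h with h | h
      · refine ⟨c, hc, Or.inr (Or.inr (Or.inr (Or.inr (Or.inl ?_))))⟩
        rw [hzz]
        ext i j
        fin_cases i <;> fin_cases j <;> simp
        · linear_combination h
        · ring
        · ring
        · linear_combination h
      · refine ⟨c, hc, Or.inr (Or.inr (Or.inr (Or.inr (Or.inr ?_))))⟩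
        rw [hzz]
        ext i j
        fin_cases i <;> fin_cases j <;> simp
        · linear_combination h
        · ring
        · ring
        · linear_combination -h
  · clear hzz
    rintro ⟨k, hk, h | h | h | h | h | h⟩
    · refine rank_one_of_outer hz0 ![k * R, 0, k * L] ![1, 0, M * R⁻¹] ?_
      rw [h]
      ext i j
      fin_cases i <;> fin_cases j <;> simp [Matrix.vecMulVec_apply]
      · linear_combination (-k * M) * hRR
      · linear_combination (-k * R⁻¹) * hLM
    · refine rank_one_of_outer hz0 ![-k * R, 0, k * L] ![1, 0, -M * R⁻¹] ?_
      rw [h]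
      ext i j
      fin_cases i <;> fin_cases j <;> simp [Matrix.vecMulVec_apply]
      · linear_combination (-k * M) * hRR
      · linear_combination (-k * R⁻¹) * hLM
    · refine rank_one_of_outer hz0 ![0, k * R, k * M] ![0, 1, L * R⁻¹] ?_
      rw [h]
      ext i j
      fin_cases i <;> fin_cases j <;> simp [Matrix.vecMulVec_apply]
      · linear_combination (-k * L) * hRR
      · linear_combination (-k * R⁻¹) * hLM
    · refine rank_one_of_outer hz0 ![0, -k * R, k * M] ![0, 1, -L * R⁻¹] ?_
      rw [h]
      ext i j
      fin_cases i <;> fin_cases j <;> simp [Matrix.vecMulVec_apply]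
      · linear_combination (-k * L) * hRR
      · linear_combination (-k * R⁻¹) * hLM
    · refine rank_one_of_outer hz0 ![k * Complex.I, k * M, 0] ![1, -L * Complex.I, 0] ?_
      rw [h]
      ext i j
      fin_cases i <;> fin_cases j <;> simp [Matrix.vecMulVec_apply]
      · linear_combination (k * L) * hII
      · linear_combination (-k * Complex.I) * hLM
    · refine rank_one_of_outer hz0 ![-k * Complex.I, k * M, 0] ![1, L * Complex.I, 0] ?_
      rw [h]
      ext i j
      fin_cases i <;> fin_cases j <;> simp [Matrix.vecMulVec_apply]
      · linear_combination (k * L) * hII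
      · linear_combination (-k * Complex.I) * hLM
end

section
/- Let t > 1 be real, λ > 0, λ ≠ 1, μ = 1/λ. Let D_t ⊆ M₃(ℂ) be the subspace spanned by t·e₁₁ + e₂₂ + e₃₃, e₁₁ + t·e₂₂ + e₃₃, e₁₂, e₂₁, e₂₃, e₃₂, e₃₁, e₁₃, and let E_t ⊆ M₃(ℂ) be the subspace spanned by t·e₁₁ + √(t/(t+1))·e₃₃, t·e₂₂ + √(t/(t+1))·e₃₃, λe₁₂ + μe₂₁, λe₂₃ + μe₃₂, λe₃₁ + μe₁₃. Then there do not exist nonzero vectors x, y ∈ ℂ³ such that x y* ∈ E_t and x̄ y* ∈ D_t, where x̄ is the entrywise complex conjugate of x. (This is the property guaranteeing that the corresponding PPT matrix X_t is an entangled edge state.) -/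
open Matrix Complex

/-- The subspace `D_t ⊆ M₃(ℂ)` spanned by `t·e₁₁+e₂₂+e₃₃`, `e₁₁+t·e₂₂+e₃₃`, `e₁₂`,
`e₂₁`, `e₂₃`, `e₃₂`, `e₃₁`, `e₁₃`. -/
noncomputable def Dt (t : ℝ) : Submodule ℂ (Matrix (Fin 3) (Fin 3) ℂ) :=
  Submodule.span ℂ
    { !![(t : ℂ), 0, 0; 0, 1, 0; 0, 0, 1],
      !![1, 0, 0; 0, (t : ℂ), 0; 0, 0, 1],
      !![0, 1, 0; 0, 0, 0; 0, 0, 0],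
      !![0, 0, 0; 1, 0, 0; 0, 0, 0],
      !![0, 0, 0; 0, 0, 1; 0, 0, 0],
      !![0, 0, 0; 0, 0, 0; 0, 1, 0],
      !![0, 0, 0; 0, 0, 0; 1, 0, 0],
      !![0, 0, 1; 0, 0, 0; 0, 0, 0] }

theorem mem_Et_eqs {t lam mu : ℝ} {M : Matrix (Fin 3) (Fin 3) ℂ} (h : M ∈ Et t lam mu) :
    ((Real.sqrt (t / (t + 1)) : ℝ) : ℂ) * (M 0 0 + M 1 1) = t * M 2 2 ∧
    (mu : ℂ) * M 0 1 = lam * M 1 0 ∧ (mu : ℂ) * M 1 2 = lam * M 2 1 ∧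
    (mu : ℂ) * M 2 0 = lam * M 0 2 := by
  unfold Et at h
  induction h using Submodule.span_induction with
  | mem M hM =>
    simp only [Set.mem_insert_iff, Set.mem_singleton_iff] at hM
    rcases hM with rfl | rfl | rfl | rfl | rfl <;> simp [mul_comm]
  | zero => simp
  | add M N _ _ hM hN =>
    obtain ⟨a, b, c, d⟩ := hM
    obtain ⟨a', b', c', d'⟩ := hN
    simp only [Matrix.add_apply]
    refine ⟨?_, ?_, ?_, ?_⟩
    · linear_combination a + a'
    · linear_combination b + b'
    · linear_combination c + c'
    · linear_combination d + d'
  | smul r M _ hM =>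
    obtain ⟨a, b, c, d⟩ := hM
    simp only [Matrix.smul_apply, smul_eq_mul]
    refine ⟨?_, ?_, ?_, ?_⟩
    · linear_combination r * a
    · linear_combination r * b
    · linear_combination r * c
    · linear_combination r * d

theorem mem_Dt_eq {t : ℝ} {M : Matrix (Fin 3) (Fin 3) ℂ} (h : M ∈ Dt t) :
    M 0 0 + M 1 1 = (t + 1) * M 2 2 := by
  unfold Dt at h
  induction h using Submodule.span_induction with
  | mem M hM =>
    simp only [Set.mem_insert_iff, Set.mem_singleton_iff] at hM
    rcases hM with rfl | rfl | rfl | rfl | rfl | rfl | rfl | rfl <;> simp [add_comm]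
  | zero => simp
  | add M N _ _ hM hN =>
    simp only [Matrix.add_apply]
    linear_combination hM + hN
  | smul r M _ hM =>
    simp only [Matrix.smul_apply, smul_eq_mul]
    linear_combination r * hM

/-- The case of a vanishing coordinate among the first two. -/
theorem case_two {t : ℝ} (ht : 1 < t) {p q v w : ℂ} (hp : q ≠ 0) (hw : w ≠ 0)
    (h : ((Real.sqrt (t / (t + 1)) : ℝ) : ℂ) * (p * v) = t * (q * w))
    (h' : star p * v = (t + 1) * (star q * w)) : False := by
  have n1 := congrArg norm h
  have n2 := congrArg norm h'
  have e : ((t : ℂ) + 1) = ((t + 1 : ℝ) : ℂ) := by push_cast; rfl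
  rw [e] at n2
  simp only [norm_mul, norm_star, Complex.norm_real, Real.norm_eq_abs] at n1 n2
  rw [abs_of_nonneg (Real.sqrt_nonneg _), abs_of_pos (by linarith)] at n1
  rw [abs_of_pos (by linarith)] at n2
  have hs : Real.sqrt (t / (t + 1)) ^ 2 = t / (t + 1) := Real.sq_sqrt (by positivity)
  set s := Real.sqrt (t / (t + 1))
  have hq : 0 < ‖q‖ * ‖w‖ := by positivity
  rw [n2] at n1
  have h3 : s * (t + 1) = t := by
    apply mul_right_cancel₀ hq.ne'
    linarith
  have h4 : s ^ 2 * (t + 1) = t := by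
    rw [hs]; field_simp
  nlinarith

/-- `x i = 0 ↔ w i = 0`-type propagation. -/
theorem zero_prop {l m : ℂ} (hl : l ≠ 0) (hm : m ≠ 0) {a b c u v w : ℂ}
    (hx : ¬ (a = 0 ∧ b = 0 ∧ c = 0)) (h1 : m * (a * v) = l * (b * u))
    (h2 : m * (c * u) = l * (a * w)) (ha : a = 0) : u = 0 := by
  subst ha
  by_contra hu
  apply hx
  simp_all

set_option maxHeartbeats 2000000 in
theorem core {t l m : ℝ} (ht : 1 < t) (hl : 0 < l) (h1 : l ≠ 1) (hm : m = 1 / l)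
    {a b c u v w : ℂ} (hx : ¬ (a = 0 ∧ b = 0 ∧ c = 0)) (hy : ¬ (u = 0 ∧ v = 0 ∧ w = 0))
    (P : ((Real.sqrt (t / (t + 1)) : ℝ) : ℂ) * (a * u + b * v) = t * (c * w))
    (A : (m : ℂ) * (a * v) = l * (b * u)) (B : (m : ℂ) * (b * w) = l * (c * v))
    (C : (m : ℂ) * (c * u) = l * (a * w))
    (D : star a * u + star b * v = (t + 1) * (star c * w)) : False := by
  have hm0 : 0 < m := by rw [hm]; positivity
  have hlm : m * l = 1 := by rw [hm]; field_simp
  have hlC : (l : ℂ) ≠ 0 := by exact_mod_cast hl.ne'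
  have hmC : (m : ℂ) ≠ 0 := by exact_mod_cast hm0.ne'
  have ht0 : (t : ℂ) ≠ 0 := by
    have : t ≠ 0 := by linarith
    exact_mod_cast this
  have hs0 : ((Real.sqrt (t / (t + 1)) : ℝ) : ℂ) ≠ 0 := by
    have : Real.sqrt (t / (t + 1)) ≠ 0 := (Real.sqrt_pos.2 (by positivity)).ne'
    exact_mod_cast this
  have ha : a = 0 ↔ u = 0 :=
    ⟨zero_prop hlC hmC hx A C, zero_prop hmC hlC (a := u) (b := v) (c := w) (u := a) (v := b)
      (w := c) hy (by linear_combination -A) (by linear_combination -C)⟩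
  have hb : b = 0 ↔ v = 0 :=
    ⟨zero_prop hlC hmC (a := b) (b := c) (c := a) (by tauto) B A,
      zero_prop hmC hlC (a := v) (b := w) (c := u) (u := b) (v := c)
      (w := a) (by tauto) (by linear_combination -B) (by linear_combination -A)⟩
  have hc : c = 0 ↔ w = 0 :=
    ⟨zero_prop hlC hmC (a := c) (b := a) (c := b) (by tauto) C B,
      zero_prop hmC hlC (a := w) (b := u) (c := v) (u := c) (v := a)
      (w := b) (by tauto) (by linear_combination -C) (by linear_combination -B)⟩
  have key : ((m : ℂ) ^ 3 - l ^ 3) * (a * b * c * u * v * w) = 0 := by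
    have : ((m : ℂ) * (a * v)) * (m * (b * w)) * (m * (c * u))
      = (l * (b * u)) * (l * (c * v)) * (l * (a * w)) := by rw [A, B, C]
    linear_combination this
  have hne : (m : ℂ) ^ 3 - l ^ 3 ≠ 0 := by
    intro h
    have h2 : m ^ 3 = l ^ 3 := by
      have : (m : ℂ) ^ 3 = l ^ 3 := sub_eq_zero.1 h
      exact_mod_cast this
    have h3 : m = l := (pow_left_inj₀ hm0.le hl.le (by norm_num)).1 h2
    rw [h3] at hlm
    apply h1
    nlinarith
  have habc : a = 0 ∨ b = 0 ∨ c = 0 := by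
    have := (mul_eq_zero.1 key).resolve_left hne
    simp only [mul_eq_zero] at this
    tauto
  by_cases hc0 : c = 0
  · have hw0 := hc.1 hc0
    subst hc0 hw0
    have hu : u ≠ 0 := by
      intro hu
      have ha0 := ha.2 hu
      subst hu ha0
      have : b * v = 0 := by simpa [hs0] using P
      rw [mul_eq_zero] at this
      tauto
    have hz : star a * a + (l : ℂ) ^ 2 * (star b * b) = 0 := by
      apply mul_right_cancel₀ hu
      have hlmC : (m : ℂ) * l = 1 := by exact_mod_cast hlm
      linear_combination a * D - l * star b * A + a * v * star b * hlmC
    have hz' : ‖a‖ ^ 2 + l ^ 2 * ‖b‖ ^ 2 = 0 := by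
      have e : ∀ z : ℂ, star z * z = ((‖z‖ ^ 2 : ℝ) : ℂ) := by
        intro z
        rw [← Complex.normSq_eq_norm_sq]
        exact (Complex.normSq_eq_conj_mul_self).symm
      rw [e, e] at hz
      exact_mod_cast hz
    have : ‖a‖ ^ 2 = 0 := by nlinarith [sq_nonneg ‖a‖, sq_nonneg (l * ‖b‖)]
    have : a = 0 := by simpa using this
    exact hu (ha.1 this)
  · have hw0 : w ≠ 0 := fun h => hc0 (hc.2 h)
    rcases habc with h | h | h
    · have hu := ha.1 h
      subst h hu
      exact case_two ht hc0 hw0 (p := b) (v := v) (by simpa using P) (by simpa using D)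
    · have hv := hb.1 h
      subst h hv
      exact case_two ht hc0 hw0 (p := a) (v := u) (by simpa using P) (by simpa using D)
    · exact hc0 h

/-- There is no rank one matrix `x y*` in `E_t` with `x̄ y* ∈ D_t`: this is the property
guaranteeing that the PPT matrix `X_t` is an entangled edge state. -/
theorem no_rank_one_in_Et_with_conj_in_Dt (t lam mu : ℝ) (ht : 1 < t) (hlam : 0 < lam)
    (h1 : lam ≠ 1) (hmu : mu = 1 / lam) :
    ¬ ∃ (x y : Fin 3 → ℂ), x ≠ 0 ∧ y ≠ 0 ∧
        (Matrix.of fun i k => x i * star (y k)) ∈ Et t lam mu ∧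
        (Matrix.of fun i k => star (x i) * star (y k)) ∈ Dt t := by
  rintro ⟨x, y, hx, hy, hE, hD⟩
  obtain ⟨P, A, B, C⟩ := mem_Et_eqs hE
  have D := mem_Dt_eq hD
  simp only [Matrix.of_apply] at P A B C D
  refine core ht hlam h1 hmu ?_ ?_ P A B C D
  · rintro ⟨h0, h1, h2⟩
    apply hx
    ext i
    fin_cases i <;> simpa
  · rintro ⟨h0, h1, h2⟩
    apply hy
    rw [star_eq_zero] at h0 h1 h2
    ext i
    fin_cases i <;> simpa
end
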